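/- arXiv:2410.20957 — 8 statements merged into one kernel-verified Lean document; each statement's English description precedes it below -/
import Mathlib

section
/- Let t > σ_max, where σ_max is the largest eigenvalue of S. Then the optimal value of problem (Pₜ) (minimizing qᵗ over [0,1]ⁿ) equals the optimal value of problem (P) (minimizing q over {0,1}ⁿ), and moreover every minimizer of qᵗ over [0,1]ⁿ lies in {0,1}ⁿ. -/
open Matrix Set

/-!
Every diagonal entry of `S` is a convex combination of its eigenvalues, hence `S i i < t`.
Restricted to a line parallel to the `i`-th axis, `qᵗ` is a quadratic polynomial with leading
coefficient `S i i - t < 0`, so it is strictly concave there (`second_difference`), and a minimizer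
over the box cannot have its `i`-th coordinate in the open interval `(0, 1)`. Thus every minimizer
is Boolean. A minimizer exists by compactness of the box, and `qᵗ = q` on the Boolean cube, which
is contained in the box; so the two optimal values coincide.
-/

/-- The diagonal entry is `∑ k, |U i k| ^ 2 * λ k` with `U` unitary, an average of eigenvalues. -/
lemma diag_lt_of_eigenvalues_lt {n : ℕ} (S : Matrix (Fin n) (Fin n) ℝ) (hS : S.IsHermitian)
    (t : ℝ) (ht : ∀ i, hS.eigenvalues i < t) (i : Fin n) : S i i < t := by
  set U : Matrix (Fin n) (Fin n) ℝ := (hS.eigenvectorUnitary : Matrix (Fin n) (Fin n) ℝ) with hU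
  have hUU : U * star U = 1 := Unitary.mul_star_self_of_mem hS.eigenvectorUnitary.2
  have h1 : ∑ k, U i k ^ 2 = 1 := by
    have := congrFun (congrFun hUU i) i
    simpa [Matrix.mul_apply, Matrix.star_apply, sq] using this
  have h2 : S i i = ∑ k, U i k ^ 2 * hS.eigenvalues k := by
    have := congrFun (congrFun hS.spectral_theorem i) i
    rw [this, Unitary.conjStarAlgAut_apply, Matrix.mul_apply]
    refine Finset.sum_congr rfl fun k _ => ?_
    simp [Matrix.mul_diagonal, Matrix.star_apply, ← hU]
    ring
  obtain ⟨k, hk⟩ : ∃ k, U i k ≠ 0 := by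
    by_contra! h
    simp [h] at h1
  have h3 : ∑ k, U i k ^ 2 * hS.eigenvalues k < ∑ k, U i k ^ 2 * t := by
    refine Finset.sum_lt_sum (fun j _ => mul_le_mul_of_nonneg_left (ht j).le (sq_nonneg _))
      ⟨k, Finset.mem_univ _, ?_⟩
    exact mul_lt_mul_of_pos_left (ht k) (by positivity)
  rwa [← Finset.sum_mul, h1, one_mul, ← h2] at h3

/-- The second difference of the penalized objective along the `i`-th axis. -/
lemma second_difference {n m : ℕ} (Q : Matrix (Fin m) (Fin n) ℝ) (q₁ : Fin m → ℝ)
    (q₂ : Fin n → ℝ) (τ t : ℝ) (qt : (Fin n → ℝ) → ℝ)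
    (hqt : ∀ u, qt u = (∑ j, (Q.mulVec u j - q₁ j) ^ 2 + τ * ∑ i, (u i - q₂ i) ^ 2)
      + t * (∑ i, u i - ∑ i, (u i) ^ 2))
    (u : Fin n → ℝ) (i : Fin n) (d : ℝ) :
    qt (u + Pi.single i d) + qt (u - Pi.single i d)
      = 2 * qt u + 2 * ((Qᵀ * Q + τ • (1 : Matrix (Fin n) (Fin n) ℝ)) i i - t) * d ^ 2 := by
  have hS : (Qᵀ * Q + τ • (1 : Matrix (Fin n) (Fin n) ℝ)) i i = ∑ j, Q j i ^ 2 + τ := by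
    simp [Matrix.mul_apply, sq]
  have hsingle : ∑ k, (Pi.single i d : Fin n → ℝ) k ^ 2 = d ^ 2 := by
    rw [Finset.sum_eq_single i] <;> simp +contextual
  have e1 : ∑ j, (Q.mulVec (u + Pi.single i d) j - q₁ j) ^ 2
      + ∑ j, (Q.mulVec (u - Pi.single i d) j - q₁ j) ^ 2
      = 2 * ∑ j, (Q.mulVec u j - q₁ j) ^ 2 + 2 * (∑ j, Q j i ^ 2) * d ^ 2 := by
    rw [← Finset.sum_add_distrib, Finset.mul_sum, Finset.mul_sum, Finset.sum_mul,
      ← Finset.sum_add_distrib]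
    refine Finset.sum_congr rfl fun j _ => ?_
    simp [Matrix.mulVec_add, Matrix.mulVec_sub]
    ring
  -- The same identity for `∑ (u - c) ^ 2` serves the `τ`-term and, with `c = 0`, the penalty.
  have e2 : ∀ c : Fin n → ℝ, ∑ k, ((u + Pi.single i d : Fin n → ℝ) k - c k) ^ 2
      + ∑ k, ((u - Pi.single i d : Fin n → ℝ) k - c k) ^ 2
      = 2 * ∑ k, (u k - c k) ^ 2 + 2 * d ^ 2 := by
    intro c
    rw [← hsingle, ← Finset.sum_add_distrib, Finset.mul_sum, Finset.mul_sum,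
      ← Finset.sum_add_distrib]
    refine Finset.sum_congr rfl fun j _ => ?_
    simp only [Pi.add_apply, Pi.sub_apply]
    ring
  have e3 : ∑ k, (u + Pi.single i d : Fin n → ℝ) k + ∑ k, (u - Pi.single i d : Fin n → ℝ) k = 2 * ∑ k, u k := by
    rw [← Finset.sum_add_distrib, Finset.mul_sum]
    refine Finset.sum_congr rfl fun j _ => ?_
    simp only [Pi.add_apply, Pi.sub_apply]
    ring
  have e4 := e2 0
  simp only [Pi.zero_apply, sub_zero] at e4
  rw [hqt, hqt, hqt, hS]
  linear_combination e1 + τ * e2 q₂ + t * e3 - t * e4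

/-- If `t` exceeds the largest eigenvalue of `S = QᵀQ + τI`, then the optimal
value of minimizing `qᵗ` over the box `[0,1]ⁿ` equals the optimal value of minimizing `q`
over the Boolean cube `{0,1}ⁿ`, and every minimizer of `qᵗ` over the box is Boolean. -/
theorem stmt_0 {n m : ℕ} (Q : Matrix (Fin m) (Fin n) ℝ) (q₁ : Fin m → ℝ) (q₂ : Fin n → ℝ)
    (τ : ℝ) (hτ : 0 ≤ τ)
    (S : Matrix (Fin n) (Fin n) ℝ)
    (hSdef : S = Qᵀ * Q + τ • (1 : Matrix (Fin n) (Fin n) ℝ))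
    (hS : S.IsHermitian)
    (q qt : (Fin n → ℝ) → ℝ)
    (hq : ∀ u, q u = ∑ j, (Q.mulVec u j - q₁ j) ^ 2 + τ * ∑ i, (u i - q₂ i) ^ 2)
    (t : ℝ) (ht : ∀ i, hS.eigenvalues i < t)
    (hqt : ∀ u, qt u = q u + t * (∑ i, u i - ∑ i, (u i) ^ 2)) :
    sInf (qt '' {u : Fin n → ℝ | ∀ i, u i ∈ Icc (0 : ℝ) 1})
      = sInf (q '' {u : Fin n → ℝ | ∀ i, u i = 0 ∨ u i = 1}) ∧
    ∀ u : Fin n → ℝ, (∀ i, u i ∈ Icc (0 : ℝ) 1) →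
      IsMinOn qt {u : Fin n → ℝ | ∀ i, u i ∈ Icc (0 : ℝ) 1} u →
      ∀ i, u i = 0 ∨ u i = 1 := by
  have hbool : ∀ u : Fin n → ℝ, (∀ i, u i ∈ Icc (0 : ℝ) 1) →
      IsMinOn qt {u : Fin n → ℝ | ∀ i, u i ∈ Icc (0 : ℝ) 1} u →
      ∀ i, u i = 0 ∨ u i = 1 := by
    intro u hu hmin i
    by_contra! hne
    have h0 : 0 < u i := lt_of_le_of_ne (hu i).1 hne.1.symm
    have h1 : u i < 1 := lt_of_le_of_ne (hu i).2 hne.2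
    -- Both `u ± d eᵢ` stay in the box, yet their average value is below `qt u`.
    obtain ⟨d, hd, hd0, hd1⟩ : ∃ d : ℝ, 0 < d ∧ d ≤ u i ∧ d ≤ 1 - u i :=
      ⟨min (u i) (1 - u i), lt_min h0 (by linarith), min_le_left _ _, min_le_right _ _⟩
    have hp : qt u ≤ qt (u + Pi.single i d) := hmin fun k => by
      rcases eq_or_ne k i with rfl | hk
      · simp only [Pi.add_apply, Pi.single_eq_same]
        constructor <;> linarith
      · simpa [hk] using hu k
    have hm : qt u ≤ qt (u - Pi.single i d) := hmin fun k => by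
      rcases eq_or_ne k i with rfl | hk
      · simp only [Pi.sub_apply, Pi.single_eq_same]
        constructor <;> linarith
      · simpa [hk] using hu k
    have hsd := second_difference Q q₁ q₂ τ t qt (fun u => by rw [hqt, hq]) u i d
    rw [← hSdef] at hsd
    have hneg : (S i i - t) * d ^ 2 < 0 :=
      mul_neg_of_neg_of_pos (sub_neg.2 (diag_lt_of_eigenvalues_lt S hS t ht i)) (by positivity)
    linarith
  refine ⟨?_, hbool⟩
  have hagree : ∀ u : Fin n → ℝ, (∀ i, u i = 0 ∨ u i = 1) → qt u = q u := by
    intro u hu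
    have : ∑ i, u i ^ 2 = ∑ i, u i :=
      Finset.sum_congr rfl fun i _ => by rcases hu i with h | h <;> simp [h]
    rw [hqt, this, sub_self, mul_zero, add_zero]
  have hsub : ∀ u : Fin n → ℝ, (∀ i, u i = 0 ∨ u i = 1) → ∀ i, u i ∈ Icc (0 : ℝ) 1 := by
    intro u hu i
    rcases hu i with h | h <;> simp [h]
  have hcompact : IsCompact {u : Fin n → ℝ | ∀ i, u i ∈ Icc (0 : ℝ) 1} :=
    isCompact_pi_infinite fun _ => isCompact_Icc
  have hcont : Continuous qt := by
    rw [funext fun u => (hqt u).trans (by rw [hq])]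
    simp only [Matrix.mulVec, dotProduct]
    fun_prop
  obtain ⟨u, hu, hmin⟩ := hcompact.exists_isMinOn ⟨0, fun i => by simp⟩ hcont.continuousOn
  have hub := hbool u hu hmin
  have hl1 : IsLeast (qt '' {u : Fin n → ℝ | ∀ i, u i ∈ Icc (0 : ℝ) 1}) (qt u) :=
    ⟨mem_image_of_mem _ hu, by rintro _ ⟨v, hv, rfl⟩; exact hmin hv⟩
  have hl2 : IsLeast (q '' {u : Fin n → ℝ | ∀ i, u i = 0 ∨ u i = 1}) (qt u) := by
    refine ⟨⟨u, hub, (hagree u hub).symm⟩, ?_⟩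
    rintro _ ⟨v, hv, rfl⟩
    rw [← hagree v hv]
    exact hmin (hsub v hv)
  rw [hl1.csInf_eq, hl2.csInf_eq]
end

section
/- Let A be a symmetric negative definite n×n real matrix and c ∈ ℝⁿ. Then the function f(u) := uᵀAu + cᵀu attains its minimum over the box [0,1]ⁿ, and every minimizer of f over [0,1]ⁿ lies in the Boolean cube {0,1}ⁿ. -/
/-!
Existence is compactness of the box together with continuity of the quadratic function.
A coordinate `u i` strictly between `0` and `1` leaves room to move by `± e` along the `i`-th axis
without leaving the box. With `d = e • eᵢ`, the parallelogram-type identity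
`f (u + d) + f (u - d) = 2 f u + 2 dᵀAd` and `dᵀAd < 0` show that one of the two moved points has
a value strictly below `f u`, so `u` is not a minimizer.
-/

open Matrix Set

/-- For a symmetric negative definite matrix `A` and `c ∈ ℝⁿ`, the function
`f(u) = uᵀAu + cᵀu` attains its minimum over `[0,1]ⁿ`, and every minimizer over `[0,1]ⁿ`
lies in `{0,1}ⁿ`. -/
theorem stmt_2 {n : ℕ} (A : Matrix (Fin n) (Fin n) ℝ) (hsym : Aᵀ = A)
    (hneg : ∀ x : Fin n → ℝ, x ≠ 0 → x ⬝ᵥ A.mulVec x < 0)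
    (c : Fin n → ℝ) (f : (Fin n → ℝ) → ℝ)
    (hf : ∀ u, f u = u ⬝ᵥ A.mulVec u + c ⬝ᵥ u) :
    (∃ u : Fin n → ℝ, (∀ i, u i ∈ Icc (0 : ℝ) 1) ∧
      IsMinOn f {u : Fin n → ℝ | ∀ i, u i ∈ Icc (0 : ℝ) 1} u) ∧
    ∀ u : Fin n → ℝ, (∀ i, u i ∈ Icc (0 : ℝ) 1) →
      IsMinOn f {u : Fin n → ℝ | ∀ i, u i ∈ Icc (0 : ℝ) 1} u →
      ∀ i, u i = 0 ∨ u i = 1 := by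
  refine ⟨?_, ?_⟩
  · have hbox : {u : Fin n → ℝ | ∀ i, u i ∈ Icc (0 : ℝ) 1} = univ.pi fun _ => Icc (0 : ℝ) 1 := by
      ext u
      simp only [mem_setOf_eq, mem_univ_pi]
    have hcomp : IsCompact {u : Fin n → ℝ | ∀ i, u i ∈ Icc (0 : ℝ) 1} :=
      hbox ▸ isCompact_univ_pi fun _ => isCompact_Icc
    have hcont : Continuous f := by
      rw [funext hf]
      simp only [dotProduct, mulVec]
      fun_prop
    obtain ⟨u, hu, hmin⟩ := hcomp.exists_isMinOn ⟨0, fun i => by simp⟩ hcont.continuousOn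
    exact ⟨u, hu, hmin⟩
  · intro u hu hmin i
    by_contra! h
    have h0 : 0 < u i := lt_of_le_of_ne (hu i).1 h.1.symm
    have h1 : u i < 1 := lt_of_le_of_ne (hu i).2 h.2
    -- The largest step that keeps both `u + d` and `u - d` in the box.
    obtain ⟨e, he, hel, her⟩ : ∃ e : ℝ, 0 < e ∧ e ≤ u i ∧ e ≤ 1 - u i :=
      ⟨min (u i) (1 - u i), lt_min h0 (by linarith), min_le_left _ _, min_le_right _ _⟩
    set d : Fin n → ℝ := Pi.single i e with hd
    have hd0 : d ≠ 0 := by simpa [hd] using he.ne'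
    have hplus : ∀ j, (u + d) j ∈ Icc (0 : ℝ) 1 := by
      intro j
      rcases eq_or_ne j i with rfl | hj
      · simp only [hd, Pi.add_apply, Pi.single_eq_same, mem_Icc]
        constructor <;> linarith
      · simpa [hd, hj] using hu j
    have hminus : ∀ j, (u - d) j ∈ Icc (0 : ℝ) 1 := by
      intro j
      rcases eq_or_ne j i with rfl | hj
      · simp only [hd, Pi.sub_apply, Pi.single_eq_same, mem_Icc]
        constructor <;> linarith
      · simpa [hd, hj] using hu j
    have hp : f u ≤ f (u + d) := hmin hplus
    have hm : f u ≤ f (u - d) := hmin hminus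
    have hsum : f (u + d) + f (u - d) = 2 * f u + 2 * (d ⬝ᵥ A.mulVec d) := by
      simp only [hf, mulVec_add, mulVec_sub, dotProduct_add, dotProduct_sub, add_dotProduct,
        sub_dotProduct]
      ring
    linarith [hneg d hd0]
end

section
/- Let A be a symmetric n×n real matrix with strictly negative diagonal, i.e., A_{ii} < 0 for every i, and let c ∈ ℝⁿ. Then every minimizer of f(u) := uᵀAu + cᵀu over the box [0,1]ⁿ lies in the Boolean cube {0,1}ⁿ. -/
/-!
If a coordinate `u i` of a minimizer were in the open interval `(0, 1)`, then `u ± t eᵢ` would both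
lie in the box for `t = min (u i) (1 - u i) > 0`. The second-difference identity
`f (u + t eᵢ) + f (u - t eᵢ) = 2 f u + 2 t² A i i` and `A i i < 0` then force one of these two
values below `f u`.
-/

open Matrix Set

/-- For a symmetric matrix `A` with strictly negative diagonal and `c ∈ ℝⁿ`,
every minimizer of `f(u) = uᵀAu + cᵀu` over `[0,1]ⁿ` lies in `{0,1}ⁿ`. -/
theorem stmt_3 {n : ℕ} (A : Matrix (Fin n) (Fin n) ℝ) (hsym : Aᵀ = A)
    (hdiag : ∀ i, A i i < 0)
    (c : Fin n → ℝ) (f : (Fin n → ℝ) → ℝ)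
    (hf : ∀ u, f u = u ⬝ᵥ A.mulVec u + c ⬝ᵥ u) :
    ∀ u : Fin n → ℝ, (∀ i, u i ∈ Icc (0 : ℝ) 1) →
      IsMinOn f {u : Fin n → ℝ | ∀ i, u i ∈ Icc (0 : ℝ) 1} u →
      ∀ i, u i = 0 ∨ u i = 1 := by
  intro u hu hmin i
  by_contra! hne
  have h0 : 0 < u i := lt_of_le_of_ne (hu i).1 (Ne.symm hne.1)
  have h1 : u i < 1 := lt_of_le_of_ne (hu i).2 hne.2
  obtain ⟨t, ht, ht0, ht1⟩ : ∃ t : ℝ, 0 < t ∧ t ≤ u i ∧ t ≤ 1 - u i :=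
    ⟨min (u i) (1 - u i), lt_min h0 (by linarith), min_le_left _ _, min_le_right _ _⟩
  have hbox : ∀ s : ℝ, |s| ≤ t → f u ≤ f (u + Pi.single i s) := by
    intro s hs
    have hs' := abs_le.mp hs
    refine hmin fun j => ?_
    by_cases hj : j = i
    · subst hj
      simp only [Pi.add_apply, Pi.single_eq_same]
      constructor <;> linarith
    · simpa [Pi.single_eq_of_ne hj] using hu j
  have hplus := hbox t (abs_of_pos ht).le
  have hminus := hbox (-t) (by rw [abs_neg, abs_of_pos ht])
  have hquad : Pi.single i t ⬝ᵥ A.mulVec (Pi.single i t) = t * (A i i * t) := by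
    simp [single_dotProduct, mulVec_single, mul_comm]
  have hneg : t * (A i i * t) < 0 := by nlinarith [hdiag i, mul_pos ht ht]
  rw [Pi.single_neg] at hminus
  simp only [hf, mulVec_add, mulVec_neg, dotProduct_add, add_dotProduct, dotProduct_neg,
    neg_dotProduct, hquad] at hplus hminus
  linarith
end

section
/- Fix t ≥ 0 and a Boolean point u ∈ {0,1}ⁿ. Then u is a KKT point of the problem of minimizing qᵗ over [0,1]ⁿ if and only if [∇q(u)]ᵢ(1 − 2uᵢ) + t ≥ 0 for every i = 1, …, n, where [∇q(u)]ᵢ = 2[Su − s]ᵢ. -/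
/-!
The KKT system decouples over coordinates. Let `g i = 2 (S u - s) i`. Where `u i = 0`,
complementary slackness forces `β i = 0`, so stationarity reads `α i = g i + t`; where
`u i = 1` it forces `α i = 0`, so `β i = -g i + t`. In both cases the one free multiplier
equals `g i * (1 - 2 * u i) + t`, and the system is solvable exactly when this is nonnegative.
-/

open Matrix

/-- For a Boolean point `u ∈ {0,1}ⁿ` and `t ≥ 0`, `u` is a KKT point of
minimizing `qᵗ` over `[0,1]ⁿ` (whose gradient at `u` is `2(Su − s) − 2tu + te`)
iff `[∇q(u)]ᵢ(1 − 2uᵢ) + t ≥ 0` for all `i`, where `[∇q(u)]ᵢ = 2[Su − s]ᵢ`. -/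
theorem stmt_5 {n m : ℕ} (Q : Matrix (Fin m) (Fin n) ℝ) (q₁ : Fin m → ℝ) (q₂ : Fin n → ℝ)
    (τ : ℝ) (hτ : 0 ≤ τ)
    (S : Matrix (Fin n) (Fin n) ℝ)
    (hSdef : S = Qᵀ * Q + τ • (1 : Matrix (Fin n) (Fin n) ℝ))
    (s : Fin n → ℝ) (hsdef : s = Qᵀ.mulVec q₁ + τ • q₂)
    (t : ℝ) (ht : 0 ≤ t)
    (u : Fin n → ℝ) (hu : ∀ i, u i = 0 ∨ u i = 1) :
    (∃ α β : Fin n → ℝ, (∀ i, 0 ≤ α i) ∧ (∀ i, 0 ≤ β i) ∧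
      (∀ i, (2 * (S.mulVec u i - s i) - 2 * t * u i + t) - α i + β i = 0) ∧
      (∀ i, α i * u i = 0) ∧ (∀ i, β i * (u i - 1) = 0)) ↔
    ∀ i, 2 * (S.mulVec u i - s i) * (1 - 2 * u i) + t ≥ 0 := by
  constructor
  · rintro ⟨α, β, hα, hβ, h, hαu, hβu⟩ i
    have h1 := h i
    have h2 := hα i
    have h3 := hβ i
    have h4 := hαu i
    have h5 := hβu i
    rcases hu i with h0 | h0 <;> rw [h0] at h1 h4 h5 ⊢ <;> linarith
  · intro h
    -- Complementary slackness puts the whole multiplier on the active bound: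
    -- `α i` carries it when `u i = 0`, `β i` when `u i = 1`.
    refine ⟨fun i => (2 * (S.mulVec u i - s i) * (1 - 2 * u i) + t) * (1 - u i),
      fun i => (2 * (S.mulVec u i - s i) * (1 - 2 * u i) + t) * u i, ?_, ?_, ?_, ?_, ?_⟩ <;>
    intro i <;> have hi := h i <;>
    rcases hu i with h0 | h0 <;> simp only [h0] at hi ⊢ <;> linarith
end

section
/- If u ∈ {0,1}ⁿ is a global minimizer of q over the Boolean cube {0,1}ⁿ, then for every i = 1, …, n it holds that [∇q(u)]ᵢ(1 − 2uᵢ) + ρᵢ ≥ 0, where [∇q(u)]ᵢ = 2[Su − s]ᵢ and ρᵢ := S_{ii} is the i-th diagonal entry of S = QᵀQ + τI. -/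
/-!
Flipping the `i`-th bit of `u` gives the Boolean vector `v = u + d eᵢ` with `d = 1 - 2uᵢ`, `d² = 1`.
Since `q` is quadratic, `q v - q u = d [∇q(u)]ᵢ + d² Sᵢᵢ` exactly, and the left-hand side is
nonnegative by minimality of `u`. The two sums of squares in `q` are expanded separately
along `eᵢ`.
-/

open Matrix

/-- If `u ∈ {0,1}ⁿ` is a global minimizer of `q` over the Boolean cube, then
`[∇q(u)]ᵢ(1 − 2uᵢ) + Sᵢᵢ ≥ 0` for every `i`, where `[∇q(u)]ᵢ = 2[Su − s]ᵢ` and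
`S = QᵀQ + τI`, `s = Qᵀq₁ + τq₂`. -/
theorem stmt_6 {n m : ℕ} (Q : Matrix (Fin m) (Fin n) ℝ) (q₁ : Fin m → ℝ) (q₂ : Fin n → ℝ)
    (τ : ℝ) (hτ : 0 ≤ τ)
    (S : Matrix (Fin n) (Fin n) ℝ)
    (hSdef : S = Qᵀ * Q + τ • (1 : Matrix (Fin n) (Fin n) ℝ))
    (s : Fin n → ℝ) (hsdef : s = Qᵀ.mulVec q₁ + τ • q₂)
    (q : (Fin n → ℝ) → ℝ)
    (hq : ∀ u, q u = ∑ j, (Q.mulVec u j - q₁ j) ^ 2 + τ * ∑ i, (u i - q₂ i) ^ 2)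
    (u : Fin n → ℝ) (hu : ∀ i, u i = 0 ∨ u i = 1)
    (hmin : ∀ v : Fin n → ℝ, (∀ i, v i = 0 ∨ v i = 1) → q u ≤ q v) :
    ∀ i, 2 * (S.mulVec u i - s i) * (1 - 2 * u i) + S i i ≥ 0 := by
  intro i
  set d : ℝ := 1 - 2 * u i with hd
  have hd2 : d ^ 2 = 1 := by
    rcases hu i with h | h <;> rw [hd, h] <;> norm_num
  -- `v` is `u` with its `i`-th bit flipped
  set v : Fin n → ℝ := u + Pi.single i d with hv
  have hvbool : ∀ k, v k = 0 ∨ v k = 1 := by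
    intro k
    by_cases hk : k = i
    · subst hk
      rcases hu k with h | h
      · right; simp [hv, hd, h]
      · left; simp [hv, hd, h]; norm_num
    · simpa [hv, hk] using hu k
  have hQv : ∀ j, Q.mulVec v j = Q.mulVec u j + Q j i * d := by
    intro j
    simp [hv, Matrix.mulVec_add, Matrix.mulVec_single, mul_comm]
  have h1 : ∑ j, (Q.mulVec v j - q₁ j) ^ 2 = ∑ j, (Q.mulVec u j - q₁ j) ^ 2
      + 2 * d * (∑ j, Q j i * Q.mulVec u j - ∑ j, Q j i * q₁ j)
      + d ^ 2 * ∑ j, Q j i * Q j i := by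
    rw [← Finset.sum_sub_distrib, Finset.mul_sum, Finset.mul_sum, ← Finset.sum_add_distrib,
      ← Finset.sum_add_distrib]
    refine Finset.sum_congr rfl fun j _ => ?_
    rw [hQv]
    ring
  have h2 : ∑ k, (v k - q₂ k) ^ 2 = ∑ k, (u k - q₂ k) ^ 2
      + 2 * d * (u i - q₂ i) + d ^ 2 := by
    rw [← Finset.add_sum_erase _ _ (Finset.mem_univ i),
      ← Finset.add_sum_erase _ (fun k => (u k - q₂ k) ^ 2) (Finset.mem_univ i)]
    have : ∑ k ∈ Finset.univ.erase i, (v k - q₂ k) ^ 2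
        = ∑ k ∈ Finset.univ.erase i, (u k - q₂ k) ^ 2 := by
      refine Finset.sum_congr rfl fun k hk => ?_
      simp [hv, Finset.ne_of_mem_erase hk]
    have hvi : v i = u i + d := by simp [hv]
    rw [this, hvi]
    ring
  have hSu : S.mulVec u i = ∑ j, Q j i * Q.mulVec u j + τ * u i := by
    rw [hSdef, Matrix.add_mulVec, ← Matrix.mulVec_mulVec, Matrix.smul_mulVec, Matrix.one_mulVec]
    rfl
  have hs : s i = ∑ j, Q j i * q₁ j + τ * q₂ i := by
    rw [hsdef]
    rfl
  have hSii : S i i = ∑ j, Q j i * Q j i + τ := by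
    rw [hSdef]
    simp [Matrix.mul_apply]
  have hle := hmin v hvbool
  rw [hq, hq, h1, h2, hd2] at hle
  rw [hSu, hs, hSii]
  linarith
end

section
/- Let A be a real m×n matrix, b ∈ ℝ^m, γ > 0, and let σ be the largest eigenvalue of AᵀA. Define ℓ(w) := ‖Aw − b‖² and let w⁺ be the minimizer over ℝⁿ of w ↦ ℓ(w) + (1/γ)‖w − w⁰‖². Then ℓ(w⁰) − ℓ(w⁺) ≥ (2γ/(1 + γσ)²)·‖Aᵀ(Aw⁰ − b)‖². -/
open Matrix

/-!
Put `d = w⁺ - w⁰`, `H = AᵀA` and `δ = Aᵀ(Aw⁰ - b)`. First-order optimality of `w⁺` reads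
`δ = -(H d + d/γ)`, and substituting this into the expansion of `ℓ` at `w⁰` gives
`ℓ(w⁰) - ℓ(w⁺) = -2 δ⬝d - ‖Ad‖² = ‖Ad‖² + (2/γ)‖d‖²`.
Since `H ≤ σ`, we have `‖Ad‖² ≤ σ‖d‖²` and `‖Hd‖² ≤ σ²‖d‖²`, so
`‖δ‖² = ‖Hd‖² + (2/γ)‖Ad‖² + ‖d‖²/γ² ≤ (σ + 1/γ)²‖d‖²`,
whence `(2γ/(1 + γσ)²)‖δ‖² ≤ (2/γ)‖d‖²`, and the term `‖Ad‖² ≥ 0` can be dropped.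
-/

open scoped MatrixOrder in
lemma dotProduct_mulVec_le_of_isGreatest_eigenvalues {m n : ℕ} (A : Matrix (Fin m) (Fin n) ℝ)
    (hH : (Aᵀ * A).IsHermitian) (σ : ℝ) (hσ : IsGreatest (Set.range hH.eigenvalues) σ)
    (u : Fin n → ℝ) : A *ᵥ u ⬝ᵥ A *ᵥ u ≤ σ * (u ⬝ᵥ u) := by
  have h1 : Aᵀ * A ≤ algebraMap ℝ (Matrix (Fin n) (Fin n) ℝ) σ := by
    refine le_algebraMap_of_spectrum_le (fun x hx => ?_) hH
    rw [hH.spectrum_real_eq_range_eigenvalues] at hx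
    exact hσ.2 hx
  have h2 := (Matrix.le_iff.1 h1).dotProduct_mulVec_nonneg u
  rw [Algebra.algebraMap_eq_smul_one, sub_mulVec, dotProduct_sub, smul_mulVec, one_mulVec,
    dotProduct_smul, ← mulVec_mulVec, dotProduct_mulVec, vecMul_transpose] at h2
  simpa using h2

/-- The bound `‖AᵀAu‖² ≤ σ²‖u‖²` follows from `‖Av‖² ≤ σ‖v‖²` by Cauchy–Schwarz, since
`‖AᵀAu‖² = ⟨Au, A(AᵀAu)⟩`. -/
lemma dotProduct_gram_mulVec_le {m n : ℕ} (A : Matrix (Fin m) (Fin n) ℝ) (σ : ℝ) (hσ : 0 ≤ σ)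
    (hA : ∀ u, A *ᵥ u ⬝ᵥ A *ᵥ u ≤ σ * (u ⬝ᵥ u)) (u : Fin n → ℝ) :
    (Aᵀ *ᵥ (A *ᵥ u)) ⬝ᵥ (Aᵀ *ᵥ (A *ᵥ u)) ≤ σ ^ 2 * (u ⬝ᵥ u) := by
  set v := Aᵀ *ᵥ (A *ᵥ u) with hv
  have e : v ⬝ᵥ v = A *ᵥ u ⬝ᵥ A *ᵥ v := by
    rw [dotProduct_mulVec, ← mulVec_transpose, transpose_transpose, dotProduct_comm]
  have cs : (A *ᵥ u ⬝ᵥ A *ᵥ v) ^ 2 ≤ (A *ᵥ u ⬝ᵥ A *ᵥ u) * (A *ᵥ v ⬝ᵥ A *ᵥ v) := by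
    simpa [dotProduct, sq] using Finset.sum_mul_sq_le_sq_mul_sq Finset.univ (A *ᵥ u) (A *ᵥ v)
  have hu0 : 0 ≤ u ⬝ᵥ u := by simpa using dotProduct_self_star_nonneg u
  have hv0 : 0 ≤ v ⬝ᵥ v := by simpa using dotProduct_self_star_nonneg v
  have hAv0 : 0 ≤ A *ᵥ v ⬝ᵥ A *ᵥ v := by simpa using dotProduct_self_star_nonneg (A *ᵥ v)
  have h : (v ⬝ᵥ v) ^ 2 ≤ (σ * (u ⬝ᵥ u)) * (σ * (v ⬝ᵥ v)) := by
    rw [← e] at cs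
    exact cs.trans (mul_le_mul (hA u) (hA v) hAv0 (by positivity))
  rcases hv0.eq_or_lt with h0 | h0
  · rw [← h0]; positivity
  · refine le_of_mul_le_mul_right ?_ h0
    linarith

/-- For `ℓ(w) = ‖Aw − b‖²`, `γ > 0`, `σ` the largest eigenvalue of `AᵀA`,
and `w⁺` the minimizer of `w ↦ ℓ(w) + (1/γ)‖w − w⁰‖²`, one has
`ℓ(w⁰) − ℓ(w⁺) ≥ (2γ/(1 + γσ)²)‖Aᵀ(Aw⁰ − b)‖²`. -/
theorem stmt_13 {m n : ℕ} (A : Matrix (Fin m) (Fin n) ℝ) (b : Fin m → ℝ)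
    (γ : ℝ) (hγ : 0 < γ)
    (hH : (Aᵀ * A).IsHermitian)
    (σ : ℝ) (hσ : IsGreatest (Set.range hH.eigenvalues) σ)
    (ℓ : (Fin n → ℝ) → ℝ)
    (hℓ : ∀ w, ℓ w = ∑ j, (A.mulVec w j - b j) ^ 2)
    (w0 wplus : Fin n → ℝ)
    (hmin : ∀ w : Fin n → ℝ,
      ℓ wplus + (1 / γ) * ∑ i, (wplus i - w0 i) ^ 2
        ≤ ℓ w + (1 / γ) * ∑ i, (w i - w0 i) ^ 2) :
    ℓ w0 - ℓ wplus
      ≥ (2 * γ / (1 + γ * σ) ^ 2) * ∑ i, (Aᵀ.mulVec (A.mulVec w0 - b) i) ^ 2 := by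
  have hσ0 : 0 ≤ σ := by
    obtain ⟨i, rfl⟩ := hσ.1
    have hps : (Aᵀ * A).PosSemidef := by
      simpa using posSemidef_conjTranspose_mul_self A
    exact hps.eigenvalues_nonneg i
  have hA := dotProduct_mulVec_le_of_isGreatest_eigenvalues A hH σ hσ
  have nn : ∀ {k : ℕ} (x : Fin k → ℝ), 0 ≤ x ⬝ᵥ x := fun x => by
    simpa using dotProduct_self_star_nonneg x
  have adj : ∀ (x : Fin m → ℝ) (v : Fin n → ℝ), x ⬝ᵥ A *ᵥ v = Aᵀ *ᵥ x ⬝ᵥ v := fun x v => by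
    rw [dotProduct_mulVec, ← mulVec_transpose]
  have hℓ' : ∀ w, ℓ w = (A *ᵥ w - b) ⬝ᵥ (A *ᵥ w - b) := fun w => by
    simp [hℓ, dotProduct, sq]
  have hn : ∀ w : Fin n → ℝ, ∑ i, (w i - w0 i) ^ 2 = (w - w0) ⬝ᵥ (w - w0) := fun w => by
    simp [dotProduct, sq]
  have hexp : ∀ (w v : Fin n → ℝ) (t : ℝ), ℓ (w + t • v)
      = ℓ w + 2 * t * (Aᵀ *ᵥ (A *ᵥ w - b) ⬝ᵥ v) + t ^ 2 * (A *ᵥ v ⬝ᵥ A *ᵥ v) := by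
    intro w v t
    have e : A *ᵥ (w + t • v) - b = (A *ᵥ w - b) + t • A *ᵥ v := by
      rw [mulVec_add, mulVec_smul]; abel
    rw [hℓ', hℓ', e, ← adj]
    generalize A *ᵥ w - b = r
    simp only [add_dotProduct, dotProduct_add, smul_dotProduct, dotProduct_smul, smul_eq_mul,
      dotProduct_comm (A *ᵥ v) r]
    ring
  obtain ⟨d, rfl⟩ : ∃ d, wplus = w0 + d := ⟨wplus - w0, by abel⟩
  set δ := Aᵀ *ᵥ (A *ᵥ w0 - b) with hδ
  have hgrad : Aᵀ *ᵥ (A *ᵥ (w0 + d) - b) = δ + Aᵀ *ᵥ (A *ᵥ d) := by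
    rw [hδ, ← mulVec_add, mulVec_add]; congr 1; abel
  -- `g` is half the gradient of the regularized objective at the minimizer.
  set g := δ + Aᵀ *ᵥ (A *ᵥ d) + (1 / γ) • d with hg
  have hquad : ∀ t : ℝ, 0 ≤ 2 * t * (g ⬝ᵥ g)
      + t ^ 2 * (A *ᵥ g ⬝ᵥ A *ᵥ g + 1 / γ * (g ⬝ᵥ g)) := by
    intro t
    have h := hmin (w0 + d + t • g)
    rw [hexp, hn, hn, hgrad] at h
    have e1 : w0 + d + t • g - w0 = d + t • g := by abel
    have e2 : w0 + d - w0 = d := by abel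
    have e3 : g ⬝ᵥ g = (δ + Aᵀ *ᵥ (A *ᵥ d)) ⬝ᵥ g + 1 / γ * (d ⬝ᵥ g) := by
      conv_lhs => rw [hg, ← hg, add_dotProduct, smul_dotProduct, smul_eq_mul]
    have e4 : (d + t • g) ⬝ᵥ (d + t • g)
        = d ⬝ᵥ d + 2 * t * (d ⬝ᵥ g) + t ^ 2 * (g ⬝ᵥ g) := by
      simp only [add_dotProduct, dotProduct_add, smul_dotProduct, dotProduct_smul, smul_eq_mul,
        dotProduct_comm g d]
      ring
    rw [e1, e2, e4] at h
    linear_combination h - 2 * t * e3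
  have hg0 : g = 0 := by
    rw [← dotProduct_self_eq_zero]
    generalize A *ᵥ g ⬝ᵥ A *ᵥ g + 1 / γ * (g ⬝ᵥ g) = C at hquad
    generalize g ⬝ᵥ g = G at hquad
    -- The quadratic `2tG + t²C` is nonnegative for all `t`, so its discriminant `(2G)²` is `≤ 0`.
    have h := discrim_le_zero (a := C) (b := 2 * G) (c := 0) fun t => by linarith [hquad t]
    unfold discrim at h
    nlinarith
  have hδd : δ = -(Aᵀ *ᵥ (A *ᵥ d) + (1 / γ) • d) := by
    rw [eq_neg_iff_add_eq_zero, ← add_assoc]; exact hg0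
  have hHd := dotProduct_gram_mulVec_le A σ hσ0 hA d
  have hAd := hA d
  have hAd0 := nn (A *ᵥ d)
  have hsum : ∑ i, (δ i) ^ 2 = δ ⬝ᵥ δ := by simp [dotProduct, sq]
  have hdiff : ℓ w0 - ℓ (w0 + d) = A *ᵥ d ⬝ᵥ A *ᵥ d + 2 / γ * (d ⬝ᵥ d) := by
    have h := hexp w0 d 1
    rw [one_smul, ← hδ, hδd, neg_dotProduct, add_dotProduct, smul_dotProduct, ← adj,
      smul_eq_mul] at h
    rw [h]; ring
  have hnorm : δ ⬝ᵥ δ = (Aᵀ *ᵥ (A *ᵥ d)) ⬝ᵥ (Aᵀ *ᵥ (A *ᵥ d))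
      + 2 / γ * (A *ᵥ d ⬝ᵥ A *ᵥ d) + 1 / γ ^ 2 * (d ⬝ᵥ d) := by
    rw [hδd]
    simp only [neg_dotProduct, dotProduct_neg, add_dotProduct, dotProduct_add, smul_dotProduct,
      dotProduct_smul, smul_eq_mul, dotProduct_comm d (Aᵀ *ᵥ (A *ᵥ d)), adj (A *ᵥ d) d]
    ring
  have hbound : δ ⬝ᵥ δ ≤ (σ + 1 / γ) ^ 2 * (d ⬝ᵥ d) := by
    have h := mul_le_mul_of_nonneg_left hAd (by positivity : 0 ≤ 2 / γ)
    rw [hnorm]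
    calc _ ≤ σ ^ 2 * (d ⬝ᵥ d) + 2 / γ * (σ * (d ⬝ᵥ d)) + 1 / γ ^ 2 * (d ⬝ᵥ d) := by gcongr
      _ = _ := by ring
  rw [hsum, hdiff, ge_iff_le]
  calc 2 * γ / (1 + γ * σ) ^ 2 * (δ ⬝ᵥ δ)
      ≤ 2 * γ / (1 + γ * σ) ^ 2 * ((σ + 1 / γ) ^ 2 * (d ⬝ᵥ d)) := by gcongr
    _ = 2 / γ * (d ⬝ᵥ d) := by
        have : 1 + γ * σ ≠ 0 := by positivity
        field_simp
        ring
    _ ≤ _ := by linarith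
end

section
/- Fix λ > 0, t ≥ 0, ξ ∈ ℝⁿ, and define the perturbed objective q_ξ(u) := q(u) + λ‖u − ξ‖² and its DC-penalized version q_ξᵗ(u) := q_ξ(u) + t(eᵀu − uᵀu). A Boolean point u ∈ {0,1}ⁿ is a KKT point of the problem of minimizing q_ξᵗ over [0,1]ⁿ if and only if 2[Su − s]ᵢ(1 − 2uᵢ) + 2λ(uᵢ − ξᵢ)(1 − 2uᵢ) + t ≥ 0 for every i = 1, …, n. -/
/-!
The KKT system decouples over coordinates. Let `g i` be the `i`-th partial derivative of the
penalized objective. If `u i = 0`, complementary slackness forces `β i = 0`, so stationarity reads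
`α i = g i` and is solvable with `α i ≥ 0` iff `g i ≥ 0`; if `u i = 1`, it forces `α i = 0`, and
the condition is `β i = -g i ≥ 0`. Both cases say `g i * (1 - 2 * u i) ≥ 0`, and since
`(1 - 2 * u i) ^ 2 = 1` the penalty part `t * (1 - 2 * u i)` of `g i` contributes exactly `t`.
-/

open Matrix

/-- For `λ > 0`, `t ≥ 0`, `ξ ∈ ℝⁿ` and the perturbed objective
`q_ξᵗ(u) = q(u) + λ‖u − ξ‖² + t(eᵀu − uᵀu)` (whose gradient at `u` is
`2(Su − s) + 2λ(u − ξ) − 2tu + te`), a Boolean point `u ∈ {0,1}ⁿ` is a KKT point of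
minimizing `q_ξᵗ` over `[0,1]ⁿ` iff
`2[Su − s]ᵢ(1 − 2uᵢ) + 2λ(uᵢ − ξᵢ)(1 − 2uᵢ) + t ≥ 0` for every `i`. -/
theorem stmt_14 {n m : ℕ} (Q : Matrix (Fin m) (Fin n) ℝ) (q₁ : Fin m → ℝ) (q₂ : Fin n → ℝ)
    (τ : ℝ) (hτ : 0 ≤ τ)
    (S : Matrix (Fin n) (Fin n) ℝ)
    (hSdef : S = Qᵀ * Q + τ • (1 : Matrix (Fin n) (Fin n) ℝ))
    (s : Fin n → ℝ) (hsdef : s = Qᵀ.mulVec q₁ + τ • q₂)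
    (lam : ℝ) (hlam : 0 < lam) (t : ℝ) (ht : 0 ≤ t) (ξ : Fin n → ℝ)
    (u : Fin n → ℝ) (hu : ∀ i, u i = 0 ∨ u i = 1) :
    (∃ α β : Fin n → ℝ, (∀ i, 0 ≤ α i) ∧ (∀ i, 0 ≤ β i) ∧
      (∀ i, (2 * (S.mulVec u i - s i) + 2 * lam * (u i - ξ i) - 2 * t * u i + t)
              - α i + β i = 0) ∧
      (∀ i, α i * u i = 0) ∧ (∀ i, β i * (u i - 1) = 0)) ↔
    ∀ i, 2 * (S.mulVec u i - s i) * (1 - 2 * u i)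
          + 2 * lam * (u i - ξ i) * (1 - 2 * u i) + t ≥ 0 := by
  constructor
  · rintro ⟨α, β, hα, hβ, hgrad, hαu, hβu⟩ i
    have h1 := hα i
    have h2 := hβ i
    have h3 := hgrad i
    have h4 := hαu i
    have h5 := hβu i
    rcases hu i with h | h <;> rw [h] at h3 h4 h5 ⊢ <;> linarith
  · intro H
    -- At a Boolean point complementary slackness leaves one free multiplier per coordinate:
    -- `α i` is the partial derivative where `u i = 0`, `β i` its negative where `u i = 1`.
    refine ⟨fun i => (1 - u i) * (2 * (S.mulVec u i - s i) + 2 * lam * (u i - ξ i)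
        - 2 * t * u i + t),
      fun i => -(u i * (2 * (S.mulVec u i - s i) + 2 * lam * (u i - ξ i)
        - 2 * t * u i + t)), ?_, ?_, ?_, ?_, ?_⟩ <;> intro i <;> have h1 := H i <;>
      rcases hu i with h | h <;> simp only [h] at h1 ⊢ <;> linarith
end

section
/- Fix u ∈ {0,1}ⁿ, λ > 0, t ≥ 0, and set ϱᵢ := 2[Su − s]ᵢ(1 − 2uᵢ) for i = 1, …, n. Let ξ¹ and ξ² be independent random vectors, each distributed according to the uniform probability measure on [0,1]ⁿ. Then the probability that both ξ¹ and ξ² satisfy all n perturbed stationarity inequalities at u — that is, 2λ(uᵢ − ξᵏᵢ)(1 − 2uᵢ) + ϱᵢ + t ≥ 0 for every i = 1, …, n and for both k = 1 and k = 2 — is at most ∏_{i=1}^n min((ϱᵢ + t)/(2λ), 1)². -/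
open Matrix MeasureTheory

/-! For `u ∈ {0,1}` the inequality `2λ(u - x)(1 - 2u) + r ≥ 0` reads `x ≤ r / (2λ)` when `u = 0` and
`x ≥ 1 - r / (2λ)` when `u = 1`, so in both cases it cuts out of `[0,1]` a subset of an interval of
length `min (r / (2λ)) 1` (`volume_restrict_stationarity_le`). The set of points of `[0,1]ⁿ` satisfying
all `n` inequalities is a box, whose measure is the product of the measures of its sides, and the
event for `(ξ¹, ξ²)` is the square of this box, so independence squares the bound. -/

/-- The bound in one coordinate. For `r < 0` both sides vanish: the set misses `[0,1]`, and
`ENNReal.ofReal` truncates the negative right-hand side to `0`. -/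
lemma volume_restrict_stationarity_le {u lam r : ℝ} (hu : u = 0 ∨ u = 1) (hlam : 0 < lam) :
    (volume : Measure ℝ).restrict (Set.Icc 0 1) {x | 2 * lam * (u - x) * (1 - 2 * u) + r ≥ 0}
      ≤ ENNReal.ofReal (min (r / (2 * lam)) 1) := by
  have h2 : 0 < 2 * lam := by positivity
  rw [Measure.restrict_apply' measurableSet_Icc]
  rcases hu with rfl | rfl
  · calc _ ≤ volume (Set.Icc 0 (min (r / (2 * lam)) 1)) := by
          refine measure_mono ?_
          rintro x ⟨hx, hx0, hx1⟩
          refine ⟨hx0, le_min ?_ hx1⟩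
          rw [le_div_iff₀ h2]
          simp only [Set.mem_setOf_eq] at hx
          linarith
      _ = _ := by rw [Real.volume_Icc, sub_zero]
  · calc _ ≤ volume (Set.Icc (1 - min (r / (2 * lam)) 1) 1) := by
          refine measure_mono ?_
          rintro x ⟨hx, hx0, hx1⟩
          refine ⟨?_, hx1⟩
          rw [sub_le_comm]
          refine le_min ?_ (by linarith)
          rw [le_div_iff₀ h2]
          simp only [Set.mem_setOf_eq] at hx
          linarith
      _ = _ := by rw [Real.volume_Icc, sub_sub_cancel]

/-- With `ϱᵢ = 2[Su − s]ᵢ(1 − 2uᵢ)` for a Boolean point `u ∈ {0,1}ⁿ`,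
`λ > 0`, `t ≥ 0`, and `ξ¹, ξ²` independent and uniform on `[0,1]ⁿ` (i.e. jointly
distributed as the product of two copies of the uniform measure on `[0,1]ⁿ`), the
probability that both `ξ¹` and `ξ²` satisfy all `n` perturbed stationarity inequalities
at `u` is at most `∏ᵢ min((ϱᵢ + t)/(2λ), 1)²`. -/
theorem stmt_16 {n m : ℕ} (Q : Matrix (Fin m) (Fin n) ℝ) (q₁ : Fin m → ℝ) (q₂ : Fin n → ℝ)
    (τ : ℝ) (hτ : 0 ≤ τ)
    (S : Matrix (Fin n) (Fin n) ℝ)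
    (hSdef : S = Qᵀ * Q + τ • (1 : Matrix (Fin n) (Fin n) ℝ))
    (s : Fin n → ℝ) (hsdef : s = Qᵀ.mulVec q₁ + τ • q₂)
    (u : Fin n → ℝ) (hu : ∀ i, u i = 0 ∨ u i = 1)
    (lam : ℝ) (hlam : 0 < lam) (t : ℝ) (ht : 0 ≤ t)
    (ϱ : Fin n → ℝ) (hϱ : ∀ i, ϱ i = 2 * (S.mulVec u i - s i) * (1 - 2 * u i))
    (μ : Measure (Fin n → ℝ))
    (hμ : μ = Measure.pi fun _ : Fin n => (volume : Measure ℝ).restrict (Set.Icc 0 1)) :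
    (μ.prod μ)
      {ξ : (Fin n → ℝ) × (Fin n → ℝ) |
        (∀ i, 2 * lam * (u i - ξ.1 i) * (1 - 2 * u i) + ϱ i + t ≥ 0) ∧
        (∀ i, 2 * lam * (u i - ξ.2 i) * (1 - 2 * u i) + ϱ i + t ≥ 0)}
    ≤ ∏ i, ENNReal.ofReal (min ((ϱ i + t) / (2 * lam)) 1) ^ 2 := by
  subst hμ
  have hbox : Measure.pi (fun _ : Fin n => (volume : Measure ℝ).restrict (Set.Icc 0 1))
      (Set.univ.pi fun i => {x | 2 * lam * (u i - x) * (1 - 2 * u i) + (ϱ i + t) ≥ 0})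
      ≤ ∏ i, ENNReal.ofReal (min ((ϱ i + t) / (2 * lam)) 1) := by
    rw [Measure.pi_pi]
    exact Finset.prod_le_prod' fun i _ => volume_restrict_stationarity_le (hu i) hlam
  rw [Finset.prod_pow, sq]
  refine le_trans (le_of_eq ?_) (mul_le_mul' hbox hbox)
  rw [← Measure.prod_prod]
  congr 1
  ext ξ
  simp [Set.mem_pi, add_assoc]
end
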